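/- Let w be a vertex of G at graph distance l ≥ 0 from the root e. For every real z with |z| < 1/m, the series A(z) = Σ_{k=0}^{∞} A_k z^k, B(z) = Σ_{k=0}^{∞} B_k z^k, and Σ_{r=0}^{∞} c_{l+r}(l) z^r all converge absolutely, and Σ_{r=0}^{∞} c_{l+r}(l) z^r = A(z)^l · B(z). -/

import Mathlib

open scoped InnerProductSpace
open Complex Real

/-!
Cutting an edge `s(u, v)` of a forest separates its two ends, so a walk from `u` to a vertex `w` on
the side of `v` splits uniquely at its first traversal of that edge: a closed walk at `u` avoiding
the edge, the step from `u` to `v`, and an arbitrary walk from `v` to `w`. Iterating along the path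
from `e` to `w` multiplies, for each edge of the path, `X` and the series of closed walks avoiding
that edge, and leaves the series of closed walks at `w`. Splitting closed walks in the same way at
their returns shows that, in a regular forest, these series depend neither on the edge nor on the
vertex.
-/

section WalkSeries

open SimpleGraph PowerSeries

variable {V : Type*} {G : SimpleGraph V}

noncomputable instance locallyFiniteDeleteEdges [G.LocallyFinite] (s : Set (Sym2 V)) :
    (G.deleteEdges s).LocallyFinite :=
  fun v ↦ ((G.neighborSet v).toFinite.subset fun _ h ↦ G.deleteEdges_le s h).fintype

lemma card_walk_length_succ (G : SimpleGraph V) [G.LocallyFinite] (k : ℕ) (v w : V) :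
    Nat.card {p : G.Walk v w // p.length = k + 1} =
      ∑ u ∈ G.neighborFinset v, Nat.card {p : G.Walk u w // p.length = k} := by
  classical
  let cons : (Σ u : G.neighborSet v, {p : G.Walk u w // p.length = k}) →
      {p : G.Walk v w // p.length = k + 1} :=
    fun x ↦ ⟨Walk.cons x.1.2 x.2.1, congrArg (· + 1) x.2.2⟩
  have cons_bijective : Function.Bijective cons := by
    constructor
    · rintro ⟨⟨u, hu⟩, p, hp⟩ ⟨⟨u', hu'⟩, p', hp'⟩ h
      obtain ⟨h₁, h⟩ := Walk.cons.inj (congrArg Subtype.val h)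
      obtain rfl : u = u' := h₁
      obtain rfl : p = p' := eq_of_heq h
      rfl
    · rintro ⟨p, hp⟩
      cases p with
      | nil => simp at hp
      | cons hu p => exact ⟨⟨⟨_, hu⟩, p, by simpa using hp⟩, rfl⟩
  rw [← Nat.card_congr (Equiv.ofBijective cons cons_bijective), Nat.card_sigma]
  exact (Finset.sum_subtype _ (fun u ↦ by simp)
    fun u ↦ Nat.card {p : G.Walk u w // p.length = k}).symm

lemma card_walk_length_zero [DecidableEq V] (G : SimpleGraph V) (v w : V) :
    Nat.card {p : G.Walk v w // p.length = 0} = if v = w then 1 else 0 := by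
  split_ifs with h
  · subst h
    rw [Nat.card_eq_one_iff_unique]
    exact ⟨⟨fun p q ↦ Subtype.ext ((Walk.length_eq_zero_iff.1 p.2).eq_nil.trans
      (Walk.length_eq_zero_iff.1 q.2).eq_nil.symm)⟩, ⟨⟨Walk.nil, rfl⟩⟩⟩
  · rw [Nat.card_eq_zero]
    exact .inl ⟨fun p ↦ h (Walk.eq_of_length_eq_zero p.2)⟩

lemma card_walk_length_le_pow [G.LocallyFinite] {m : ℕ} (hdeg : ∀ v, G.degree v ≤ m) (k : ℕ)
    (v w : V) : Nat.card {p : G.Walk v w // p.length = k} ≤ m ^ k := by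
  classical
  induction k generalizing v with
  | zero => rw [card_walk_length_zero]; split_ifs <;> simp
  | succ k ih =>
    rw [card_walk_length_succ, pow_succ']
    calc ∑ u ∈ G.neighborFinset v, Nat.card {p : G.Walk u w // p.length = k}
        ≤ G.degree v * m ^ k := Finset.sum_le_card_nsmul _ _ _ fun u _ ↦ ih u
      _ ≤ m * m ^ k := Nat.mul_le_mul_right _ (hdeg v)

lemma card_walk_notMem_edges (G : SimpleGraph V) (x : Sym2 V) (u v : V) (k : ℕ) :
    Nat.card {p : G.Walk u v // p.length = k ∧ x ∉ p.edges} =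
      Nat.card {p : (G.deleteEdges {x}).Walk u v // p.length = k} := by
  have hle : G.deleteEdges {x} ≤ G := G.deleteEdges_le _
  have notMem (p : (G.deleteEdges {x}).Walk u v) : x ∉ (p.mapLe hle).edges := fun h ↦ by
    rw [Walk.edges_mapLe_eq_edges] at h
    simpa using p.edges_subset_edgeSet h
  refine Nat.card_congr
    { toFun := fun p ↦ ⟨p.1.toDeleteEdge x p.2.2, by simpa using p.2.1⟩
      invFun := fun p ↦ ⟨p.1.mapLe hle, by simp [p.2], notMem p.1⟩
      left_inv := fun p ↦ Subtype.ext (by simp)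
      right_inv := fun p ↦ Subtype.ext ?_ }
  exact Walk.map_injective_of_injective (f := .ofLE hle) Function.injective_id _ _ (by simp)

/-- The generating function of the walks from `v` to `w`, graded by length, with the counts cast
into `R`. -/
noncomputable def walkSeries (R : Type*) [Semiring R] (G : SimpleGraph V) (v w : V) : R⟦X⟧ :=
  .mk fun k ↦ (Nat.card {p : G.Walk v w // p.length = k} : R)

/-- The generating function of the closed walks at `u` that avoid the edge `s(u, v)`: the series `A`
of a regular tree. Such walks are encoded as walks in the graph with this edge deleted. -/
noncomputable def branchSeries (R : Type*) [Semiring R] (G : SimpleGraph V) (u v : V) : R⟦X⟧ :=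
  walkSeries R (G.deleteEdges {s(u, v)}) u u

section Semiring

variable {R : Type*} [Semiring R]

lemma coeff_walkSeries (k : ℕ) (v w : V) :
    coeff k (walkSeries R G v w) = Nat.card {p : G.Walk v w // p.length = k} :=
  coeff_mk _ _

lemma coeff_branchSeries (k : ℕ) (u v : V) :
    coeff k (branchSeries R G u v) =
      Nat.card {p : G.Walk u u // p.length = k ∧ s(u, v) ∉ p.edges} := by
  rw [branchSeries, coeff_walkSeries, card_walk_notMem_edges]

lemma walkSeries_first_step [DecidableEq V] [G.LocallyFinite] (v w : V) :
    walkSeries R G v w =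
      (if v = w then 1 else 0) + X * ∑ u ∈ G.neighborFinset v, walkSeries R G u w := by
  ext k
  cases k with
  | zero =>
    rw [map_add, coeff_zero_X_mul, coeff_walkSeries, card_walk_length_zero]
    split_ifs <;> simp
  | succ k =>
    rw [map_add, coeff_succ_X_mul, map_sum, coeff_walkSeries, card_walk_length_succ]
    simp only [coeff_walkSeries, Nat.cast_sum]
    split_ifs <;> simp [coeff_one]

lemma walkSeries_first_step_of_ne [G.LocallyFinite] {v w : V} (h : v ≠ w) :
    walkSeries R G v w = X * ∑ u ∈ G.neighborFinset v, walkSeries R G u w := by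
  classical
  rw [walkSeries_first_step, if_neg h, zero_add]

/-- The factor `X` makes each coefficient depend only on earlier ones. -/
lemma eq_of_first_step [G.LocallyFinite] {a : V} {s f g : V → R⟦X⟧}
    (hf : ∀ v, G.Reachable a v → f v = s v + X * ∑ u ∈ G.neighborFinset v, f u)
    (hg : ∀ v, G.Reachable a v → g v = s v + X * ∑ u ∈ G.neighborFinset v, g u) :
    f a = g a := by
  have coeff_eq (k : ℕ) : ∀ v, G.Reachable a v → coeff k (f v) = coeff k (g v) := by
    induction k with
    | zero =>
      intro v hv
      rw [hf v hv, hg v hv, map_add, map_add, coeff_zero_X_mul, coeff_zero_X_mul]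
    | succ k ih =>
      intro v hv
      rw [hf v hv, hg v hv]
      simp only [map_add, coeff_succ_X_mul, map_sum]
      congr 1
      refine Finset.sum_congr rfl fun u hu ↦ ih u (hv.trans ?_)
      exact ((G.mem_neighborFinset v u).1 hu).reachable
  exact PowerSeries.ext fun k ↦ coeff_eq k a (Reachable.refl a)

lemma walkSeries_congr_of_reachable {H : SimpleGraph V} [G.LocallyFinite] [H.LocallyFinite]
    {v : V} (h : ∀ x, G.Reachable v x → G.neighborFinset x = H.neighborFinset x) (w : V) :
    walkSeries R G v w = walkSeries R H v w := by
  classical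
  refine eq_of_first_step (f := (walkSeries R G · w)) (g := (walkSeries R H · w))
    (fun x _ ↦ walkSeries_first_step x w) fun x hx ↦ ?_
  rw [h x hx]
  exact walkSeries_first_step x w

/-- The factor `X ^ 2` makes the first `k` coefficients of the multiplier determine the `k`-th
coefficient of the solution. -/
lemma coeff_eq_of_eq_one_add_X_sq_mul {f g s t : R⟦X⟧} (hf : f = 1 + X ^ 2 * s * f)
    (hg : g = 1 + X ^ 2 * t * g) {k : ℕ} (hst : ∀ i < k, coeff i s = coeff i t) :
    coeff k f = coeff k g := by
  induction k using Nat.strong_induction_on with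
  | _ k ih =>
    rw [hf, hg, mul_assoc, mul_assoc, map_add, map_add, coeff_X_pow_mul', coeff_X_pow_mul']
    split_ifs with hk
    · rw [coeff_mul, coeff_mul]
      congr 1
      refine Finset.sum_congr rfl fun ij hij ↦ ?_
      rw [Finset.HasAntidiagonal.mem_antidiagonal] at hij
      rw [hst ij.1 (by omega), ih ij.2 (by omega) fun i hi ↦ hst i (by omega)]
    · rfl

end Semiring

section Forest

variable {R : Type*} [CommSemiring R] [G.LocallyFinite]

lemma neighborFinset_deleteEdges_self [DecidableEq V] (u v : V) :
    (G.deleteEdges {s(u, v)}).neighborFinset u = (G.neighborFinset u).erase v := by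
  ext x
  simp only [mem_neighborFinset, deleteEdges_adj, Finset.mem_erase, Set.mem_singleton_iff,
    Sym2.congr_right]
  exact and_comm

lemma neighborFinset_deleteEdges_of_ne {x u v : V} (hu : x ≠ u) (hv : x ≠ v) :
    (G.deleteEdges {s(u, v)}).neighborFinset x = G.neighborFinset x := by
  ext y
  simp [deleteEdges_adj, hu, hv]

/-- With the start `u` replaced by any vertex still connected to it once the edge is deleted, both
sides satisfy the same first-step recursion, whose source term is the step from `u` to `v`. -/
theorem walkSeries_eq_of_isBridge {u v w : V} (huv : G.Adj u v) (hb : G.IsBridge s(u, v))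
    (hw : ¬ (G.deleteEdges {s(u, v)}).Reachable u w) :
    walkSeries R G u w = X * branchSeries R G u v * walkSeries R G v w := by
  classical
  refine eq_of_first_step (G := G.deleteEdges {s(u, v)})
    (s := fun x ↦ if x = u then X * walkSeries R G v w else 0) (f := (walkSeries R G · w))
    (g := fun x ↦ X * walkSeries R (G.deleteEdges {s(u, v)}) x u * walkSeries R G v w)
    (fun x hx ↦ ?_) (fun x _ ↦ ?_)
  · have hxw : x ≠ w := fun h ↦ hw (h ▸ hx)
    have hxv : x ≠ v := fun h ↦ isBridge_iff.1 hb (h ▸ hx)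
    rw [walkSeries_first_step_of_ne hxw]
    split_ifs with hxu
    · subst hxu
      rw [neighborFinset_deleteEdges_self, ← mul_add,
        Finset.add_sum_erase _ (walkSeries R G · w) (by simpa using huv)]
    · rw [neighborFinset_deleteEdges_of_ne hxu hxv, zero_add]
  · rw [walkSeries_first_step x u, ← Finset.sum_mul, ← Finset.mul_sum]
    split_ifs <;> ring

theorem walkSeries_eq_prod_branchSeries (hG : G.IsAcyclic) {v w : V} {p : G.Walk v w}
    (hp : p.IsPath) :
    walkSeries R G v w = X ^ p.length *
      ((p.darts.map fun d ↦ branchSeries R G d.fst d.snd).prod * walkSeries R G w w) := by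
  induction p with
  | nil => simp
  | @cons u v w huv p ih =>
    rw [Walk.isPath_def, Walk.support_cons, List.nodup_cons] at hp
    have hb : G.IsBridge s(u, v) := isAcyclic_iff_forall_adj_isBridge.1 hG huv
    have hvw : (G.deleteEdges {s(u, v)}).Reachable v w :=
      reachable_deleteEdges_iff_exists_walk.2
        ⟨p, fun h ↦ hp.1 (p.fst_mem_support_of_mem_edges h)⟩
    have huw : ¬ (G.deleteEdges {s(u, v)}).Reachable u w :=
      fun h ↦ isBridge_iff.1 hb (h.trans hvw.symm)
    rw [walkSeries_eq_of_isBridge huv hb huw, ih (Walk.isPath_def _ |>.2 hp.2),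
      Walk.length_cons, Walk.darts_cons, List.map_cons, List.prod_cons]
    ring

/-- Decomposition of a closed walk at its first return. -/
theorem walkSeries_self_eq_one_add (hG : G.IsAcyclic) (u : V) :
    walkSeries R G u u =
      1 + X ^ 2 * (∑ x ∈ G.neighborFinset u, branchSeries R G x u) * walkSeries R G u u := by
  classical
  have return_eq (x : V) (hx : x ∈ G.neighborFinset u) :
      walkSeries R G x u = X * branchSeries R G x u * walkSeries R G u u := by
    have hxu : G.Adj x u := ((G.mem_neighborFinset u x).1 hx).symm
    have hb : G.IsBridge s(x, u) := isAcyclic_iff_forall_adj_isBridge.1 hG hxu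
    exact walkSeries_eq_of_isBridge hxu hb (isBridge_iff.1 hb)
  nth_rw 1 [walkSeries_first_step, if_pos rfl, Finset.sum_congr rfl return_eq, ← Finset.sum_mul,
    ← Finset.mul_sum]
  ring

/-- The branch at `x` away from `u` contains no other edge at `u`. -/
lemma branchSeries_deleteEdges (hG : G.IsAcyclic) {u v x : V} (hxu : G.Adj x u) :
    branchSeries R (G.deleteEdges {s(u, v)}) x u = branchSeries R G x u := by
  refine (walkSeries_congr_of_reachable (fun y hy ↦ ?_) x).symm
  have not_reachable : ¬ (G.deleteEdges {s(x, u)}).Reachable x u :=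
    isBridge_iff.1 (isAcyclic_iff_forall_adj_isBridge.1 hG hxu)
  have hyu : y ≠ u := fun h ↦ not_reachable (h ▸ hy)
  have not_adj : ¬ (G.deleteEdges {s(x, u)}).Adj y u :=
    fun h ↦ not_reachable (hy.trans h.reachable)
  ext z
  by_cases hzu : z = u <;> grind [mem_neighborFinset, deleteEdges_adj]

theorem branchSeries_eq_one_add [DecidableEq V] (hG : G.IsAcyclic) (u v : V) :
    branchSeries R G u v =
      1 + X ^ 2 * (∑ x ∈ (G.neighborFinset u).erase v, branchSeries R G x u) *
        branchSeries R G u v := by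
  have h := walkSeries_self_eq_one_add (R := R) (hG.anti (G.deleteEdges_le {s(u, v)})) u
  rw [neighborFinset_deleteEdges_self] at h
  have sum_eq : ∑ x ∈ (G.neighborFinset u).erase v,
      branchSeries R (G.deleteEdges {s(u, v)}) x u =
        ∑ x ∈ (G.neighborFinset u).erase v, branchSeries R G x u := by
    refine Finset.sum_congr rfl fun x hx ↦ branchSeries_deleteEdges hG ?_
    exact ((G.mem_neighborFinset u x).1 (Finset.mem_of_mem_erase hx)).symm
  rwa [sum_eq] at h

end Forest

section Regular

variable {R : Type*} [CommSemiring R] [G.LocallyFinite] {m : ℕ}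

theorem branchSeries_eq_of_regular (hG : G.IsAcyclic) (hdeg : G.IsRegularOfDegree m)
    {u v u' v' : V} (huv : G.Adj u v) (huv' : G.Adj u' v') :
    branchSeries R G u v = branchSeries R G u' v' := by
  classical
  have card_erase {a b : V} (hab : G.Adj a b) : ((G.neighborFinset a).erase b).card = m - 1 := by
    rw [Finset.card_erase_of_mem (by simpa using hab), card_neighborFinset_eq_degree, hdeg]
  have coeff_eq (k : ℕ) : ∀ {a b}, G.Adj a b →
      coeff k (branchSeries R G a b) = coeff k (branchSeries R G u v) := by
    induction k using Nat.strong_induction_on with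
    | _ k ih =>
      intro a b hab
      have coeff_sum (i : ℕ) (hi : i < k) {c d : V} (hcd : G.Adj c d) :
          coeff i (∑ x ∈ (G.neighborFinset c).erase d, branchSeries R G x c) =
            (m - 1) • coeff i (branchSeries R G u v) := by
        rw [map_sum, ← card_erase hcd]
        refine Finset.sum_eq_card_nsmul fun x hx ↦ ih i hi ?_
        exact ((G.mem_neighborFinset c x).1 (Finset.mem_of_mem_erase hx)).symm
      exact coeff_eq_of_eq_one_add_X_sq_mul (branchSeries_eq_one_add hG a b)
        (branchSeries_eq_one_add hG u v)
        fun i hi ↦ (coeff_sum i hi hab).trans (coeff_sum i hi huv).symm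
  exact PowerSeries.ext fun k ↦ (coeff_eq k huv').symm

theorem walkSeries_self_eq_of_regular (hG : G.IsAcyclic) (hdeg : G.IsRegularOfDegree m)
    (u v : V) : walkSeries R G u u = walkSeries R G v v := by
  have sum_eq : ∑ x ∈ G.neighborFinset u, branchSeries R G x u =
      ∑ x ∈ G.neighborFinset v, branchSeries R G x v := by
    have card_eq : (G.neighborFinset u).card = (G.neighborFinset v).card :=
      (hdeg u).trans (hdeg v).symm
    rw [← Finset.sum_coe_sort _ (branchSeries R G · u),
      ← Finset.sum_coe_sort _ (branchSeries R G · v)]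
    refine Fintype.sum_equiv (Finset.equivOfCardEq card_eq) _ _ fun x ↦ ?_
    exact branchSeries_eq_of_regular hG hdeg ((G.mem_neighborFinset u _).1 x.2).symm
      ((G.mem_neighborFinset v _).1 (Finset.equivOfCardEq card_eq x).2).symm
  exact PowerSeries.ext fun k ↦ coeff_eq_of_eq_one_add_X_sq_mul
    (walkSeries_self_eq_one_add hG u) (walkSeries_self_eq_one_add hG v)
    fun i _ ↦ congrArg (coeff i) sum_eq

theorem walkSeries_eq_of_regular (hG : G.IsAcyclic) (hdeg : G.IsRegularOfDegree m) {u v w : V}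
    (huv : G.Adj u v) (huw : G.Reachable u w) :
    walkSeries R G u w =
      X ^ G.dist u w * (branchSeries R G u v ^ G.dist u w * walkSeries R G u u) := by
  obtain ⟨p, hp, hlen⟩ := huw.exists_path_of_dist
  have prod_eq : (p.darts.map fun d ↦ branchSeries R G d.fst d.snd).prod =
      branchSeries R G u v ^ p.length := by
    rw [List.prod_eq_pow_card _ (branchSeries R G u v), List.length_map, Walk.length_darts]
    simp only [List.forall_mem_map]
    exact fun d _ ↦ branchSeries_eq_of_regular hG hdeg d.adj huv
  rw [walkSeries_eq_prod_branchSeries hG hp, prod_eq, hlen,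
    walkSeries_self_eq_of_regular hG hdeg w u]

end Regular

end WalkSeries

section Evaluation

open PowerSeries

variable {R : Type*} [NormedCommRing R]

lemma coeff_mul_mul_pow (f g : R⟦X⟧) (z : R) (k : ℕ) :
    coeff k (f * g) * z ^ k = ∑ ij ∈ Finset.HasAntidiagonal.antidiagonal k,
      (coeff ij.1 f * z ^ ij.1) * (coeff ij.2 g * z ^ ij.2) := by
  rw [coeff_mul, Finset.sum_mul]
  refine Finset.sum_congr rfl fun ij hij ↦ ?_
  rw [← Finset.HasAntidiagonal.mem_antidiagonal.1 hij, pow_add]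
  ring

lemma summable_norm_coeff_mul_mul_pow {f g : R⟦X⟧} {z : R}
    (hf : Summable fun k ↦ ‖coeff k f * z ^ k‖) (hg : Summable fun k ↦ ‖coeff k g * z ^ k‖) :
    Summable fun k ↦ ‖coeff k (f * g) * z ^ k‖ := by
  simp only [coeff_mul_mul_pow]
  exact summable_norm_sum_mul_antidiagonal_of_summable_norm
    (f := fun k ↦ coeff k f * z ^ k) (g := fun k ↦ coeff k g * z ^ k) hf hg

lemma summable_norm_coeff_pow_mul_mul_pow {f g : R⟦X⟧} {z : R}
    (hf : Summable fun k ↦ ‖coeff k f * z ^ k‖) (hg : Summable fun k ↦ ‖coeff k g * z ^ k‖)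
    (l : ℕ) : Summable fun k ↦ ‖coeff k (f ^ l * g) * z ^ k‖ := by
  induction l with
  | zero => simpa using hg
  | succ l ih => simpa only [pow_succ', mul_assoc] using summable_norm_coeff_mul_mul_pow hf ih

lemma tsum_coeff_mul_mul_pow [CompleteSpace R] {f g : R⟦X⟧} {z : R}
    (hf : Summable fun k ↦ ‖coeff k f * z ^ k‖) (hg : Summable fun k ↦ ‖coeff k g * z ^ k‖) :
    ∑' k, coeff k (f * g) * z ^ k = (∑' k, coeff k f * z ^ k) * ∑' k, coeff k g * z ^ k := by
  simp only [coeff_mul_mul_pow]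
  exact (tsum_mul_tsum_eq_tsum_sum_antidiagonal_of_summable_norm
    (f := fun k ↦ coeff k f * z ^ k) (g := fun k ↦ coeff k g * z ^ k) hf hg).symm

lemma tsum_coeff_pow_mul_mul_pow [CompleteSpace R] {f g : R⟦X⟧} {z : R}
    (hf : Summable fun k ↦ ‖coeff k f * z ^ k‖) (hg : Summable fun k ↦ ‖coeff k g * z ^ k‖)
    (l : ℕ) :
    ∑' k, coeff k (f ^ l * g) * z ^ k =
      (∑' k, coeff k f * z ^ k) ^ l * ∑' k, coeff k g * z ^ k := by
  induction l with
  | zero => simp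
  | succ l ih =>
    rw [pow_succ', mul_assoc, pow_succ', mul_assoc, ← ih]
    exact tsum_coeff_mul_mul_pow hf (summable_norm_coeff_pow_mul_mul_pow hf hg l)

variable [NormOneClass R]

lemma summable_norm_coeff_walkSeries {V : Type*} {G : SimpleGraph V} [G.LocallyFinite] {m : ℕ}
    (hdeg : ∀ v, G.degree v ≤ m) {z : R} (hz : ‖z‖ < 1 / m) (v w : V) :
    Summable fun k ↦ ‖coeff k (walkSeries R G v w) * z ^ k‖ := by
  have hm : (0 : ℝ) < m := one_div_pos.1 ((norm_nonneg z).trans_lt hz)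
  have hmz : m * ‖z‖ < 1 := (lt_div_iff₀' hm).1 hz
  refine .of_nonneg_of_le (fun _ ↦ norm_nonneg _) (fun k ↦ ?_)
    (summable_geometric_of_lt_one (by positivity) hmz)
  have count_le : ‖coeff k (walkSeries R G v w)‖ ≤ (m : ℝ) ^ k := by
    rw [coeff_walkSeries]
    calc _ ≤ (Nat.card {p : G.Walk v w // p.length = k} : ℝ) := by
          simpa using Nat.norm_cast_le (α := R) _
      _ ≤ (m : ℝ) ^ k := mod_cast card_walk_length_le_pow hdeg k v w
  calc ‖coeff k (walkSeries R G v w) * z ^ k‖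
      ≤ ‖coeff k (walkSeries R G v w)‖ * ‖z ^ k‖ := norm_mul_le _ _
    _ ≤ (m : ℝ) ^ k * ‖z‖ ^ k := by gcongr; exact norm_pow_le z k
    _ = (m * ‖z‖) ^ k := (mul_pow _ _ _).symm

lemma summable_norm_coeff_branchSeries {V : Type*} {G : SimpleGraph V} [G.LocallyFinite] {m : ℕ}
    (hdeg : ∀ v, G.degree v ≤ m) {z : R} (hz : ‖z‖ < 1 / m) (u v : V) :
    Summable fun k ↦ ‖coeff k (branchSeries R G u v) * z ^ k‖ :=
  summable_norm_coeff_walkSeries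
    (fun x ↦ (SimpleGraph.degree_le_of_le (G.deleteEdges_le _)).trans (hdeg x)) hz u u

end Evaluation

theorem stmt_13_general {V : Type*} {G : SimpleGraph V} [G.LocallyFinite] (hG : G.IsAcyclic)
    {m : ℕ} (hdeg : G.IsRegularOfDegree m) {e : V} {x₁ : Sym2 V} (hx₁ : x₁ ∈ G.edgeSet)
    (hex₁ : e ∈ x₁) {A : ℕ → ℕ}
    (hA : ∀ k, A k = Nat.card {p : G.Walk e e // p.length = k ∧ x₁ ∉ p.edges})
    {B : ℕ → ℕ} (hB : ∀ k, B k = Nat.card {p : G.Walk e e // p.length = k})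
    {c : ℕ → V → ℕ} (hc : ∀ k w, c k w = Nat.card {p : G.Walk e w // p.length = k})
    {l : ℕ} {w : V} (hew : G.Reachable e w) (hw : G.dist e w = l)
    {R : Type*} [NormedCommRing R] [NormOneClass R] [CompleteSpace R] {z : R}
    (hz : ‖z‖ < 1 / m) :
    Summable (fun k ↦ ‖(A k : R) * z ^ k‖) ∧
    Summable (fun k ↦ ‖(B k : R) * z ^ k‖) ∧
    Summable (fun r ↦ ‖(c (l + r) w : R) * z ^ r‖) ∧
    ∑' r, (c (l + r) w : R) * z ^ r = (∑' k, (A k : R) * z ^ k) ^ l * ∑' k, (B k : R) * z ^ k := by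
  obtain ⟨f, rfl⟩ := hex₁
  have coeff_A (k : ℕ) : (A k : R) = PowerSeries.coeff k (branchSeries R G e f) := by
    rw [hA, coeff_branchSeries]
  have coeff_B (k : ℕ) : (B k : R) = PowerSeries.coeff k (walkSeries R G e e) := by
    rw [hB, coeff_walkSeries]
  have coeff_c (r : ℕ) : (c (l + r) w : R) =
      PowerSeries.coeff r (branchSeries R G e f ^ l * walkSeries R G e e) := by
    rw [hc, ← coeff_walkSeries, walkSeries_eq_of_regular hG hdeg hx₁ hew, hw, add_comm l r,
      PowerSeries.coeff_X_pow_mul]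
  have summable_A := summable_norm_coeff_branchSeries (fun v ↦ (hdeg v).le) hz e f
  have summable_B := summable_norm_coeff_walkSeries (fun v ↦ (hdeg v).le) hz e e
  simp only [coeff_A, coeff_B, coeff_c]
  exact ⟨summable_A, summable_B, summable_norm_coeff_pow_mul_mul_pow summable_A summable_B l,
    tsum_coeff_pow_mul_mul_pow summable_A summable_B l⟩

/-- **Generating-function identity for walks on the `m`-regular tree:** for `|z| < 1/m`
the series `A(z) = ∑ A_k z^k`, `B(z) = ∑ B_k z^k` and `∑ c_{l+r}(l) z^r` converge
absolutely, and `∑_{r} c_{l+r}(l) z^r = A(z)^l B(z)`. -/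
theorem stmt_13
    (m : ℕ) (hm : 3 ≤ m)
    (V : Type) (G : SimpleGraph V)
    [∀ v : V, Fintype (G.neighborSet v)]
    (hconn : G.Connected) (hacyc : G.IsAcyclic)
    (hdeg : ∀ v : V, G.degree v = m)
    (e : V) (x₁ : Sym2 V) (hx₁ : x₁ ∈ G.edgeSet) (hex₁ : e ∈ x₁)
    (A : ℕ → ℕ)
    (hA : ∀ k : ℕ, A k = Nat.card {p : G.Walk e e // p.length = k ∧ x₁ ∉ p.edges})
    (B : ℕ → ℕ)
    (hB : ∀ k : ℕ, B k = Nat.card {p : G.Walk e e // p.length = k})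
    (c : ℕ → V → ℕ)
    (hc : ∀ (k : ℕ) (w : V), c k w = Nat.card {p : G.Walk e w // p.length = k})
    (l : ℕ) (w : V) (hw : G.dist e w = l)
    (z : ℝ) (hz : |z| < 1 / m) :
    Summable (fun k : ℕ => |(A k : ℝ) * z ^ k|) ∧
    Summable (fun k : ℕ => |(B k : ℝ) * z ^ k|) ∧
    Summable (fun r : ℕ => |(c (l + r) w : ℝ) * z ^ r|) ∧
    (∑' r : ℕ, (c (l + r) w : ℝ) * z ^ r) =
      (∑' k : ℕ, (A k : ℝ) * z ^ k) ^ l * (∑' k : ℕ, (B k : ℝ) * z ^ k) := by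
  exact stmt_13_general (R := ℝ) hacyc hdeg hx₁ hex₁ hA hB hc (hconn e w) hw hz
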